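/- Every time optimal trajectory of (Σ) is a finite concatenation of bang and singular arcs: if γ is a time optimal trajectory on [a,b] with control u, then there exists a finite partition a = τ₀ < τ₁ < ... < τ_n = b such that on each subinterval [τ_i, τ_{i+1}], u is almost everywhere equal to one of the constants 1, −1, or 0. -/

import Mathlib

open Real MeasureTheory intervalIntegral Matrix

/-- The drift matrix `f = cos α · ![![0,1,0],![-1,0,0],![0,0,0]]`. -/
noncomputable def fM (α : ℝ) : Matrix (Fin 3) (Fin 3) ℝ :=
  Real.cos α • !![0,1,0; -1,0,0; 0,0,0]

/-- The controlled matrix `g = sin α · ![![0,0,0],![0,0,1],![0,-1,0]]`. -/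
noncomputable def gM (α : ℝ) : Matrix (Fin 3) (Fin 3) ℝ :=
  Real.sin α • !![0,0,0; 0,0,1; 0,-1,0]

/-- An admissible pair for `(Σ)` on `[a,b]`: a measurable control `u : [a,b] → [-1,1]`
together with an absolutely continuous curve `γ : [a,b] → SO(3)` solving
`γ' = γ·(f + u·g)` a.e. (expressed in integral form, entrywise). -/
structure AdmissiblePair (α a b : ℝ) (γ : ℝ → Matrix (Fin 3) (Fin 3) ℝ) (u : ℝ → ℝ) : Prop where
  hab : a ≤ b
  humeas : Measurable u
  hubound : ∀ t ∈ Set.Icc a b, |u t| ≤ 1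
  hso3 : ∀ t ∈ Set.Icc a b, γ t * (γ t).transpose = 1 ∧ (γ t).det = 1
  hcont : ContinuousOn γ (Set.Icc a b)
  hode : ∀ t ∈ Set.Icc a b, ∀ i j,
    γ t i j = γ a i j + ∫ s in a..t, (γ s * (fM α + u s • gM α)) i j

/-- Time optimality for `(Σ)`. -/
def TimeOptimal (α a b : ℝ) (γ : ℝ → Matrix (Fin 3) (Fin 3) ℝ) (u : ℝ → ℝ) : Prop :=
  AdmissiblePair α a b γ u ∧
  ∀ a' b' γ' u', AdmissiblePair α a' b' γ' u' →
    γ' a' = γ a → γ' b' = γ b → b - a ≤ b' - a'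

/-- `t` is a switching time of the control `u : [a,b] → [-1,1]`: in no neighbourhood of `t`
is `u` a.e. equal to a constant `c ∈ {-1,1}`. -/
def IsSwitching (a b : ℝ) (u : ℝ → ℝ) (t : ℝ) : Prop :=
  t ∈ Set.Icc a b ∧ ∀ ε > 0, ¬ ∃ c : ℝ, (c = 1 ∨ c = -1) ∧
    ∀ᵐ s ∂(volume.restrict (Set.Ioo (t - ε) (t + ε) ∩ Set.Icc a b)), u s = c

open Filter Topology in
theorem curve_lemma {n : ℕ} (F : (Fin n → ℝ) → (Fin 3 → ℝ)) (D : (Fin n → ℝ) →L[ℝ] (Fin 3 → ℝ))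
    (hF : HasStrictFDerivAt F D 0) (hD : D.range = ⊤) (k : Fin n → ℝ) (hk : D k = 0)
    (hpos : ∀ j, 0 < k j) (U : Set (Fin n → ℝ)) (hU : U ∈ 𝓝 (0 : Fin n → ℝ)) :
    ∃ μ ∈ U, F μ = F 0 ∧ ∀ j, 0 < μ j := by
  set φ := hF.implicitFunction F D hD (F 0) with hφ
  have h0 : φ 0 = 0 := hF.implicitFunction_apply_image hD
  have hd := hF.to_implicitFunction hD
  let κ : D.ker := ⟨k, hk⟩
  have hline : HasDerivAt (fun ε : ℝ => ε • κ) κ 0 := by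
    simpa using (hasDerivAt_id (0:ℝ)).smul_const κ
  have hd2 : HasDerivAt (fun ε : ℝ => φ (ε • κ)) k 0 := by
    have h1 : HasFDerivAt φ D.ker.subtypeL ((fun ε : ℝ => ε • κ) 0) := by
      simpa using hd.hasFDerivAt
    exact h1.comp_hasDerivAt (0:ℝ) hline
  have hc : Tendsto (fun ε : ℝ => φ (ε • κ)) (𝓝[>] 0) (𝓝 0) := by
    have := hd2.continuousAt.tendsto
    simp only [zero_smul, h0] at this
    exact this.mono_left nhdsWithin_le_nhds
  have hmap : ∀ᶠ ε in 𝓝[>] (0:ℝ), F (φ (ε • κ)) = F 0 := by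
    have h1 := hF.map_implicitFunction_eq hD
    have h2 : Tendsto (fun ε : ℝ => (F 0, ε • κ)) (𝓝[>] 0) (𝓝 (F 0, 0)) := by
      refine Tendsto.mono_left ?_ nhdsWithin_le_nhds
      have : Continuous (fun ε : ℝ => (F 0, ε • κ)) := by fun_prop
      simpa using this.tendsto 0
    exact h2.eventually h1
  have hp : ∀ᶠ ε in 𝓝[>] (0:ℝ), ∀ j, 0 < φ (ε • κ) j := by
    rw [eventually_all]
    intro j
    have hj := (hasDerivAt_pi.1 hd2) j
    have hs := (hasDerivAt_iff_tendsto_slope.1 hj).mono_left (nhdsGT_le_nhdsNE (0:ℝ))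
    filter_upwards [hs.eventually (lt_mem_nhds (hpos j)), self_mem_nhdsWithin] with ε h1 h2
    have h2 : 0 < ε := h2
    simp only [slope, zero_smul, h0, vsub_eq_sub, sub_zero, Pi.zero_apply, smul_eq_mul] at h1
    by_contra hcon
    push Not at hcon
    have := mul_nonpos_of_nonneg_of_nonpos (inv_pos.2 h2).le hcon
    linarith
  obtain ⟨ε, h1, h2, h3⟩ := (hmap.and (hp.and (hc.eventually hU))).exists
  exact ⟨_, h3, h1, h2⟩

theorem separation (K : Set (Fin 3 → ℝ)) (hK : Convex ℝ K) (h0 : (0 : Fin 3 → ℝ) ∈ K)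
    (hinterv : (0 : Fin 3 → ℝ) ∉ interior K) :
    ∃ f : (Fin 3 → ℝ) →ₗ[ℝ] ℝ, f ≠ 0 ∧ ∀ k ∈ K, f k ≤ 0 := by
  by_cases hne : (interior K).Nonempty
  · obtain ⟨f, hf, h⟩ := geometric_hahn_banach_of_nonempty_interior_point hK hinterv hne
    refine ⟨f.toLinearMap, ?_, fun k hk => by simpa using h k hk⟩
    intro h; apply hf; ext x; simpa using congrArg (fun g => g x) h
  · rw [hK.interior_nonempty_iff_affineSpan_eq_top] at hne
    have hs : Submodule.span ℝ K < ⊤ := by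
      rw [lt_top_iff_ne_top]
      intro h
      apply hne
      have h1 := affineSpan_insert_zero (k := ℝ) K
      rw [Set.insert_eq_of_mem h0] at h1
      rw [← SetLike.coe_set_eq, h1, h]; rfl
    obtain ⟨f, hf, hm⟩ := Submodule.exists_le_ker_of_lt_top _ hs
    refine ⟨f, hf, fun k hk => ?_⟩
    exact (LinearMap.mem_ker.1 (hm (Submodule.subset_span hk))).le

theorem partition_lemma (a b : ℝ) (hab : a ≤ b) (P : ℝ → ℝ → Prop)
    (hr : ∀ t ∈ Set.Ico a b, ∃ y ∈ Set.Ioc t b, P t y)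
    (hl : ∀ t ∈ Set.Ioc a b, ∃ x ∈ Set.Ico a t, ∀ y ∈ Set.Ioo x t, P y t) :
    ∃ (n : ℕ) (τ : ℕ → ℝ), τ 0 = a ∧ τ n = b ∧ (∀ i < n, τ i < τ (i + 1)) ∧
      ∀ i < n, P (τ i) (τ (i + 1)) := by
  let Q : ℝ → Prop := fun y => ∃ (n : ℕ) (τ : ℕ → ℝ), τ 0 = a ∧ τ n = y ∧
    (∀ i < n, τ i < τ (i + 1)) ∧ ∀ i < n, P (τ i) (τ (i + 1))
  have hext : ∀ x y, Q x → x < y → P x y → Q y := by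
    rintro x y ⟨n, τ, h0, hn, h1, h2⟩ hxy hP
    refine ⟨n + 1, fun i => if i ≤ n then τ i else y, by simp [h0], by simp, ?_, ?_⟩
    · intro i hi
      rcases Nat.lt_succ_iff_lt_or_eq.1 hi with h | h
      · simp [h.le, Nat.succ_le_iff.2 h, h1 i h]
      · subst h; simpa [hn] using hxy
    · intro i hi
      rcases Nat.lt_succ_iff_lt_or_eq.1 hi with h | h
      · simpa [h.le, Nat.succ_le_iff.2 h] using h2 i h
      · subst h; simpa [hn] using hP
  let S : Set ℝ := {y | y ∈ Set.Icc a b ∧ Q y}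
  have haS : a ∈ S := ⟨⟨le_rfl, hab⟩, 0, fun _ => a, rfl, rfl, by simp, by simp⟩
  have hbd : BddAbove S := ⟨b, fun y hy => hy.1.2⟩
  set s := sSup S with hs
  have has : a ≤ s := le_csSup hbd haS
  have hsb : s ≤ b := csSup_le ⟨a, haS⟩ fun y hy => hy.1.2
  have hsS : Q s := by
    rcases has.eq_or_lt with h | h
    · rw [← h]; exact haS.2
    · obtain ⟨x, hx, hP⟩ := hl s ⟨h, hsb⟩
      obtain ⟨y, hy, hxy⟩ := exists_lt_of_lt_csSup ⟨a, haS⟩ hx.2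
      rcases (le_csSup hbd hy).eq_or_lt with h' | h'
      · have : y = s := h'
        rw [← this]; exact hy.2
      · exact hext y s hy.2 h' (hP y ⟨hxy, h'⟩)
  rcases hsb.eq_or_lt with h | h
  · rw [← h]; exact hsS
  · obtain ⟨y, hy, hP⟩ := hr s ⟨has, h⟩
    have : y ∈ S := ⟨⟨has.trans hy.1.le, hy.2⟩, hext s y hsS hy.1 hP⟩
    exact absurd (le_csSup hbd this) (not_le.2 hy.1)

/-- `F` is absolutely continuous on `[a,b]` with a.e. derivative `f`. -/
def ACD (a b : ℝ) (F f : ℝ → ℝ) : Prop :=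
  AbsolutelyContinuousOnInterval F a b ∧ ∀ᵐ t, t ∈ Set.Ioo a b → HasDerivAt F (f t) t

theorem ae_Ioo_of_mem_Icc {a b : ℝ} {p : ℝ → Prop} (h : ∀ᵐ t, t ∈ Set.Ioo a b → p t) :
    ∀ᵐ t, t ∈ Set.Icc a b → p t := by
  have ha : ∀ᵐ t : ℝ, t ≠ a := by simp [ae_iff]
  have hb : ∀ᵐ t : ℝ, t ≠ b := by simp [ae_iff]
  filter_upwards [h, ha, hb] with t h1 h2 h3 h4
  exact h1 ⟨lt_of_le_of_ne h4.1 (Ne.symm h2), lt_of_le_of_ne h4.2 h3⟩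

theorem ACD.mul {a b : ℝ} {F f G g : ℝ → ℝ} (hF : ACD a b F f) (hG : ACD a b G g) :
    ACD a b (fun t => F t * G t) (fun t => f t * G t + F t * g t) := by
  refine ⟨hF.1.fun_mul hG.1, ?_⟩
  filter_upwards [hF.2, hG.2] with t h1 h2 h3
  exact (h1 h3).mul (h2 h3)

theorem ACD.add {a b : ℝ} {F f G g : ℝ → ℝ} (hF : ACD a b F f) (hG : ACD a b G g) :
    ACD a b (fun t => F t + G t) (fun t => f t + g t) := by
  refine ⟨hF.1.fun_add hG.1, ?_⟩
  filter_upwards [hF.2, hG.2] with t h1 h2 h3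
  exact (h1 h3).add (h2 h3)

theorem ACD.const_mul {a b : ℝ} {F f : ℝ → ℝ} (c : ℝ) (hF : ACD a b F f) :
    ACD a b (fun t => c * F t) (fun t => c * f t) := by
  refine ⟨hF.1.const_mul c, ?_⟩
  filter_upwards [hF.2] with t h1 h3
  exact (h1 h3).const_mul c

theorem ACD.zero {a b : ℝ} : ACD a b (fun _ => 0) (fun _ => 0) := by
  refine ⟨?_, Filter.Eventually.of_forall fun t _ => hasDerivAt_const _ _⟩
  exact (LipschitzOnWith.absolutelyContinuousOnInterval (K := 0)
    (fun x _ y _ => by simp))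

theorem ACD.congr_deriv {a b : ℝ} {F f g : ℝ → ℝ} (hF : ACD a b F f)
    (h : ∀ t ∈ Set.Icc a b, f t = g t) : ACD a b F g := by
  refine ⟨hF.1, ?_⟩
  filter_upwards [hF.2] with t h1 h3
  rw [← h t ⟨h3.1.le, h3.2.le⟩]; exact h1 h3

theorem ACD.integral {a b : ℝ} {F f : ℝ → ℝ} (hF : ACD a b F f) :
    ∀ t ∈ Set.Icc a b, F t = F a + ∫ s in a..t, f s := by
  intro t ht
  have h1 : AbsolutelyContinuousOnInterval F a t := hF.1.mono (by
    rw [Set.uIcc_of_le ht.1, Set.uIcc_of_le (ht.1.trans ht.2)]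
    exact Set.Icc_subset_Icc_right ht.2)
  have h2 : ∫ s in a..t, f s = ∫ s in a..t, deriv F s := by
    apply intervalIntegral.integral_congr_ae
    filter_upwards [ae_Ioo_of_mem_Icc hF.2] with s hs hs'
    rw [Set.uIoc_of_le ht.1] at hs'
    exact (hs ⟨hs'.1.le, hs'.2.trans ht.2⟩).deriv.symm
  rw [h2, h1.integral_deriv_eq_sub]; ring

theorem ACD.of_integral {a b : ℝ} (hab : a ≤ b) {F f : ℝ → ℝ} (hf : IntervalIntegrable f volume a b)
    (h : ∀ t ∈ Set.Icc a b, F t = F a + ∫ s in a..t, f s) : ACD a b F f := by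
  have h1 := hf.absolutelyContinuousOnInterval_intervalIntegral (c := a) (by simp)
  constructor
  · rw [absolutelyContinuousOnInterval_iff] at h1 ⊢
    intro ε hε
    obtain ⟨δ, hδ, hh⟩ := h1 ε hε
    refine ⟨δ, hδ, fun E hE hE2 => ?_⟩
    convert! hh E hE hE2 using 1
    apply Finset.sum_congr rfl
    intro i hi
    have := hE.1 i hi
    rw [Set.uIcc_of_le hab] at this
    rw [h _ this.1, h _ this.2, dist_add_left]
  · filter_upwards [hf.ae_hasDerivAt_integral] with t ht ht2
    have h3 := ht (by rw [Set.uIcc_of_le hab]; exact ⟨ht2.1.le, ht2.2.le⟩) a (by simp)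
    refine (h3.const_add (F a)).congr_of_eventuallyEq ?_
    filter_upwards [Icc_mem_nhds ht2.1 ht2.2] with s hs
    exact h s hs

theorem ACD.const {a b : ℝ} {F f : ℝ → ℝ} (hF : ACD a b F f)
    (h : ∀ t ∈ Set.Icc a b, f t = 0) : ∀ t ∈ Set.Icc a b, F t = F a := by
  intro t ht
  rw [hF.integral t ht, intervalIntegral.integral_congr (g := fun _ => 0)]
  · simp
  · intro s hs
    rw [Set.uIcc_of_le ht.1] at hs
    exact h s ⟨hs.1, hs.2.trans ht.2⟩

theorem ac_abs {a b : ℝ} {F : ℝ → ℝ} (h : AbsolutelyContinuousOnInterval F a b) :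
    AbsolutelyContinuousOnInterval (fun t => |F t|) a b := by
  rw [absolutelyContinuousOnInterval_iff] at h ⊢
  intro ε hε
  obtain ⟨δ, hδ, hh⟩ := h ε hε
  refine ⟨δ, hδ, fun E hE hE2 => lt_of_le_of_lt ?_ (hh E hE hE2)⟩
  apply Finset.sum_le_sum
  intro i _
  exact abs_abs_sub_abs_le _ _

/-- The Hamiltonian is constant along extremals. -/
theorem hamiltonian_const {a b c s : ℝ} (hab : a ≤ b) (hs : 0 < s) {m1 m2 m3 u : ℝ → ℝ}
    (hu : ∀ t ∈ Set.Icc a b, |u t| ≤ 1)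
    (h1 : ACD a b m1 (fun t => -(u t * s * m3 t))) (h2 : ACD a b m2 (fun t => c * m3 t))
    (hmax : ∀ᵐ t, t ∈ Set.Icc a b → u t * m2 t = |m2 t|) :
    ∃ C, ∀ t ∈ Set.Icc a b, c * m1 t + s * |m2 t| = C := by
  have hH : AbsolutelyContinuousOnInterval (fun t => c * m1 t + s * |m2 t|) a b :=
    (h1.1.const_mul c).fun_add ((ac_abs h2.1).const_mul s)
  rw [← Set.uIcc_of_le hab]
  apply hH.const_of_ae_hasDerivAt_zero
  rw [Set.uIcc_of_le hab]
  apply ae_Ioo_of_mem_Icc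
  filter_upwards [hH.ae_differentiableAt, h1.2, h2.2, hmax] with t d1 d2 d3 d4 ht
  have htI : t ∈ Set.Icc a b := ⟨ht.1.le, ht.2.le⟩
  have e1 := (d1 (by rwa [Set.uIcc_of_le hab])).hasDerivAt
  have e2 := ((d2 ht).const_mul c).add (((d3 ht).const_mul (u t)).const_mul s)
  have e3 := e1.sub e2
  have hmin : IsLocalMin ((fun t => c * m1 t + s * |m2 t|) -
      ((fun y => c * m1 y) + fun y => s * (u t * m2 y))) t := by
    apply Filter.Eventually.of_forall
    intro y
    have hy : u t * m2 y ≤ |m2 y| := by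
      calc u t * m2 y ≤ |u t * m2 y| := le_abs_self _
        _ = |u t| * |m2 y| := abs_mul _ _
        _ ≤ 1 * |m2 y| := by gcongr; exact hu t htI
        _ = _ := one_mul _
    have := mul_le_mul_of_nonneg_left hy hs.le
    simp only [Pi.sub_apply, Pi.add_apply]
    rw [d4 htI]; linarith
  have e4 := hmin.hasDerivAt_eq_zero e3
  have : deriv (fun t => c * m1 t + s * |m2 t|) t = 0 := by linarith
  rwa [this] at e1

/-- `u` is a.e. equal to one of the constants `1, -1, 0` on `[x,y]`. -/
def ArcOn (u : ℝ → ℝ) (x y : ℝ) : Prop :=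
  ∃ c : ℝ, (c = 1 ∨ c = -1 ∨ c = 0) ∧ ∀ᵐ t ∂(volume.restrict (Set.Icc x y)), u t = c

theorem arcOn_of_Ioo {u : ℝ → ℝ} {x y c : ℝ} (hc : c = 1 ∨ c = -1 ∨ c = 0)
    (h : ∀ᵐ t, t ∈ Set.Ioo x y → u t = c) : ArcOn u x y :=
  ⟨c, hc, (ae_restrict_iff' measurableSet_Icc).2 (ae_Ioo_of_mem_Icc h)⟩

open Filter Topology in
theorem extremal_structure {a b c s : ℝ} (hab : a ≤ b) (hc : 0 < c) (hs : 0 < s)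
    {m1 m2 m3 u : ℝ → ℝ}
    (hu : ∀ t ∈ Set.Icc a b, |u t| ≤ 1)
    (h1 : ACD a b m1 (fun t => -(u t * s * m3 t))) (h2 : ACD a b m2 (fun t => c * m3 t))
    (h3 : ACD a b m3 (fun t => u t * s * m1 t - c * m2 t))
    (hmax : ∀ᵐ t, t ∈ Set.Icc a b → u t * m2 t = |m2 t|)
    (hne : ¬ (m1 a = 0 ∧ m2 a = 0 ∧ m3 a = 0)) :
    ∃ (n : ℕ) (τ : ℕ → ℝ), τ 0 = a ∧ τ n = b ∧ (∀ i < n, τ i < τ (i + 1)) ∧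
      ∀ i < n, ArcOn u (τ i) (τ (i + 1)) := by
  obtain ⟨C, hH⟩ := hamiltonian_const hab hs hu h1 h2 hmax
  have c2 : ContinuousOn m2 (Set.Icc a b) := by
    have := h2.1.continuousOn; rwa [Set.uIcc_of_le hab] at this
  have c3 : ContinuousOn m3 (Set.Icc a b) := by
    have := h3.1.continuousOn; rwa [Set.uIcc_of_le hab] at this
  -- conservation of the norm
  set N := m1 a * m1 a + (m2 a * m2 a + m3 a * m3 a) with hNdef
  have hN : ∀ t ∈ Set.Icc a b, m1 t * m1 t + (m2 t * m2 t + m3 t * m3 t) = N := by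
    refine ACD.const ((h1.mul h1).add ((h2.mul h2).add (h3.mul h3))) ?_
    intro t _; ring
  have hNpos : N ≠ 0 := by
    intro h
    apply hne
    have e1 := mul_self_nonneg (m1 a)
    have e2 := mul_self_nonneg (m2 a)
    have e3 := mul_self_nonneg (m3 a)
    refine ⟨mul_self_eq_zero.1 ?_, mul_self_eq_zero.1 ?_, mul_self_eq_zero.1 ?_⟩ <;> linarith
  -- m2 is differentiable everywhere in the interior
  have d2 : ∀ t ∈ Set.Ioo a b, HasDerivAt m2 (c * m3 t) t := by
    intro t ht
    have hcc : ContinuousOn (fun t => c * m3 t) (Set.Icc a b) := continuousOn_const.mul c3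
    have hii : IntervalIntegrable (fun t => c * m3 t) volume a t := by
      apply ContinuousOn.intervalIntegrable
      rw [Set.uIcc_of_le ht.1.le]
      exact hcc.mono (Set.Icc_subset_Icc_right ht.2.le)
    have hd := intervalIntegral.integral_hasDerivAt_right hii
      (hcc.stronglyMeasurableAtFilter_nhdsWithin measurableSet_Icc t |>.filter_mono
        (by rw [nhdsWithin_eq_nhds.2 (Icc_mem_nhds ht.1 ht.2)]))
      (hcc.continuousAt (Icc_mem_nhds ht.1 ht.2))
    refine (hd.const_add (m2 a)).congr_of_eventuallyEq ?_
    filter_upwards [Icc_mem_nhds ht.1 ht.2] with y hy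
    exact h2.integral y hy
  -- arcs
  have arcG : ∀ x y, a ≤ x → y ≤ b → (∀ z ∈ Set.Ioo x y, m2 z ≠ 0) → ArcOn u x y := by
    intro x y hx hy hz
    have hsub : Set.Ioo x y ⊆ Set.Icc a b := fun z hz => ⟨hx.trans hz.1.le, hz.2.le.trans hy⟩
    have hsign : (∀ z ∈ Set.Ioo x y, 0 < m2 z) ∨ (∀ z ∈ Set.Ioo x y, m2 z < 0) := by
      by_contra hcon
      push Not at hcon
      obtain ⟨⟨z, hz1, hz2⟩, w, hw1, hw2⟩ := hcon
      obtain ⟨v, hv, hv0⟩ := isPreconnected_Ioo.intermediate_value hz1 hw1 (c2.mono hsub) ⟨hz2, hw2⟩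
      exact hz v hv hv0
    rcases hsign with h | h
    · apply arcOn_of_Ioo (c := 1) (Or.inl rfl)
      filter_upwards [hmax] with t ht ht2
      have e := ht (hsub ht2)
      rw [abs_of_pos (h t ht2)] at e
      exact mul_right_cancel₀ (h t ht2).ne' (by rw [e, one_mul])
    · apply arcOn_of_Ioo (c := -1) (Or.inr (Or.inl rfl))
      filter_upwards [hmax] with t ht ht2
      have e := ht (hsub ht2)
      rw [abs_of_neg (h t ht2)] at e
      exact mul_right_cancel₀ (h t ht2).ne (by rw [e]; ring)
  have arcZ : ∀ x y, a ≤ x → y ≤ b → (∀ z ∈ Set.Ioo x y, m2 z = 0) → ArcOn u x y := by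
    intro x y hx hy hz
    have hsub : Set.Ioo x y ⊆ Set.Ioo a b :=
      fun z hz => ⟨hx.trans_lt hz.1, hz.2.trans_le hy⟩
    have hz3 : ∀ z ∈ Set.Ioo x y, m3 z = 0 := by
      intro z hz'
      have e1 := d2 z (hsub hz')
      have e2 : HasDerivAt m2 0 z := by
        refine (hasDerivAt_const z (0:ℝ)).congr_of_eventuallyEq ?_
        filter_upwards [Ioo_mem_nhds hz'.1 hz'.2] with w hw using hz w hw
      have := e1.unique e2
      exact (mul_eq_zero.1 this).resolve_left hc.ne'
    apply arcOn_of_Ioo (c := 0) (Or.inr (Or.inr rfl))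
    filter_upwards [h3.2] with t ht ht2
    have e1 := ht (hsub ht2)
    have e2 : HasDerivAt m3 0 t := by
      refine (hasDerivAt_const t (0:ℝ)).congr_of_eventuallyEq ?_
      filter_upwards [Ioo_mem_nhds ht2.1 ht2.2] with w hw using hz3 w hw
    have e3 := e1.unique e2
    rw [hz t ht2, mul_zero, sub_zero] at e3
    have e4 := hN t ⟨(hsub ht2).1.le, (hsub ht2).2.le⟩
    rw [hz t ht2, hz3 t ht2] at e4
    have e5 : m1 t ≠ 0 := by
      intro h; rw [h] at e4; apply hNpos; rw [← e4]; ring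
    rcases mul_eq_zero.1 e3 with h | h
    · exact (mul_eq_zero.1 h).resolve_right hs.ne'
    · exact absurd h e5
  -- local dichotomy
  have dich : ∀ t ∈ Set.Icc a b, ∃ ε > 0, ∀ x ∈ Set.Icc a b, |x - t| < ε → m2 x = 0 →
      ∀ y ∈ Set.uIcc x t, m2 y = 0 := by
    intro t ht
    by_cases hz : m2 t = 0
    swap
    · have : ∀ᶠ x in 𝓝[Set.Icc a b] t, m2 x ≠ 0 := (c2 t ht).eventually_ne hz
      rw [eventually_nhdsWithin_iff, Metric.eventually_nhds_iff] at this
      obtain ⟨ε, hε, hh⟩ := this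
      exact ⟨ε, hε, fun x hx hxt h0 => absurd h0 (hh hxt hx)⟩
    have key : ∀ᶠ x in 𝓝[Set.Icc a b] t, m2 x ≠ 0 → m3 x ≠ 0 := by
      by_cases hz3 : m3 t = 0
      swap
      · filter_upwards [(c3 t ht).eventually_ne hz3] with x hx _ using hx
      have eN := hN t ht
      have eH := hH t ht
      rw [hz, hz3] at eN
      rw [hz, abs_zero, mul_zero, add_zero] at eH
      have hm : m1 t ≠ 0 := by
        intro h; rw [h] at eN; apply hNpos; rw [← eN]; ring
      have hev : ∀ᶠ x in 𝓝[Set.Icc a b] t, (c ^ 2 + s ^ 2) * |m2 x| ≠ 2 * c * m1 t * s := by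
        have hcc : ContinuousWithinAt (fun x => (c ^ 2 + s ^ 2) * |m2 x|) (Set.Icc a b) t :=
          continuousWithinAt_const.mul (c2 t ht).abs
        apply hcc.eventually_ne
        simp only [hz, abs_zero, mul_zero]
        exact (mul_ne_zero (mul_ne_zero (mul_ne_zero two_ne_zero hc.ne') hm) hs.ne').symm
      filter_upwards [hev, self_mem_nhdsWithin] with x hx hxI hx2 hx3
      apply hx
      have fN := hN x hxI
      have fH := hH x hxI
      rw [hx3, ← eN] at fN
      rw [← eH] at fH
      have hpos : |m2 x| ≠ 0 := abs_ne_zero.2 hx2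
      have hsq : |m2 x| * |m2 x| = m2 x * m2 x := abs_mul_abs_self _
      have hc1 : c * m1 x = c * m1 t - s * |m2 x| := by linarith
      have : c * c * (m1 x * m1 x) = (c * m1 t - s * |m2 x|) * (c * m1 t - s * |m2 x|) := by
        rw [← hc1]; ring
      apply mul_right_cancel₀ hpos
      rw [← hsq] at fN
      have h9 : m1 x * m1 x = m1 t * m1 t - |m2 x| * |m2 x| := by linarith
      rw [h9] at this
      linarith
    rw [eventually_nhdsWithin_iff, Metric.eventually_nhds_iff] at key
    obtain ⟨ε, hε, hh⟩ := key
    refine ⟨ε, hε, fun x hx hxt h0 y hy => ?_⟩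
    by_contra hy0
    have hsub : Set.uIcc x t ⊆ Set.Icc a b := Set.uIcc_subset_Icc hx ht
    obtain ⟨z, hz1, hz2⟩ := isCompact_uIcc.exists_isMaxOn ⟨y, hy⟩
      (((c2.mono hsub).mul (c2.mono hsub)))
    have hz3 : m2 z ≠ 0 := by
      intro h
      have := hz2 hy
      simp only [Set.mem_ofPred_eq, Pi.mul_apply, h, mul_zero] at this
      exact absurd this (not_le.2 (mul_self_pos.2 hy0))
    have hzx : z ≠ x := fun h => hz3 (h ▸ h0)
    have hzt : z ≠ t := fun h => hz3 (h ▸ hz)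
    have hz4 : z ∈ Set.Ioo (min x t) (max x t) := by
      rcases le_total x t with hle | hle
      · rw [Set.uIcc_of_le hle] at hz1
        rw [min_eq_left hle, max_eq_right hle]
        exact ⟨lt_of_le_of_ne hz1.1 hzx.symm, lt_of_le_of_ne hz1.2 hzt⟩
      · rw [Set.uIcc_of_ge hle] at hz1
        rw [min_eq_right hle, max_eq_left hle]
        exact ⟨lt_of_le_of_ne hz1.1 hzt.symm, lt_of_le_of_ne hz1.2 hzx⟩
    have hz5 : z ∈ Set.Ioo a b :=
      ⟨(le_min hx.1 ht.1).trans_lt hz4.1, hz4.2.trans_le (max_le hx.2 ht.2)⟩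
    have hloc : IsLocalMax (m2 * m2) z := hz2.isLocalMax (Icc_mem_nhds hz4.1 hz4.2)
    have hder := hloc.hasDerivAt_eq_zero ((d2 z hz5).mul (d2 z hz5))
    have hz6 : m3 z ≠ 0 := by
      refine hh (?_ : |z - t| < ε) (hsub hz1) hz3
      refine lt_of_le_of_lt ?_ hxt
      rw [abs_sub_comm z t, abs_sub_comm x t]
      exact Set.abs_sub_right_of_mem_uIcc hz1
    have : c * m3 z * m2 z ≠ 0 := mul_ne_zero (mul_ne_zero hc.ne' hz6) hz3
    apply this
    linarith
  apply partition_lemma a b hab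
  · intro t ht
    obtain ⟨ε, hε, hd⟩ := dich t ⟨ht.1, ht.2.le⟩
    have hlt : t < min (t + ε) b := lt_min (by linarith) ht.2
    by_cases hx : ∃ x ∈ Set.Ioo t (min (t + ε) b), m2 x = 0
    · obtain ⟨x, hx, hx0⟩ := hx
      have hxb : x ≤ b := hx.2.le.trans (min_le_right _ _)
      have hxe : x < t + ε := hx.2.trans_le (min_le_left _ _)
      refine ⟨x, ⟨hx.1, hxb⟩, arcZ t x ht.1 hxb fun z hz => ?_⟩
      refine hd x ⟨ht.1.trans hx.1.le, hxb⟩ ?_ hx0 z ?_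
      · rw [abs_of_pos (by linarith [hx.1])]; linarith
      · rw [Set.uIcc_of_ge hx.1.le]; exact ⟨hz.1.le, hz.2.le⟩
    · push Not at hx
      exact ⟨_, ⟨hlt, min_le_right _ _⟩, arcG _ _ ht.1 (min_le_right _ _) hx⟩
  · intro t ht
    obtain ⟨ε, hε, hd⟩ := dich t ⟨ht.1.le, ht.2⟩
    have hlt : max (t - ε) a < t := max_lt (by linarith) ht.1
    by_cases hx : ∃ x ∈ Set.Ioo (max (t - ε) a) t, m2 x = 0
    · obtain ⟨x, hx, hx0⟩ := hx
      have hxb : a ≤ x := (le_max_right _ _).trans hx.1.le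
      have hxe : t - ε < x := (le_max_left _ _).trans_lt hx.1
      refine ⟨x, ⟨hxb, hx.2⟩, fun y hy => arcZ y t (hxb.trans hy.1.le) ht.2 fun z hz => ?_⟩
      refine hd x ⟨hxb, hx.2.le.trans ht.2⟩ ?_ hx0 z ?_
      · rw [abs_sub_comm, abs_of_pos (by linarith [hx.2])]; linarith
      · rw [Set.uIcc_of_le hx.2.le]; exact ⟨(hy.1.trans hz.1).le, hz.2.le⟩
    · push Not at hx
      refine ⟨_, ⟨le_max_right _ _, hlt⟩, fun y hy => arcG y t ?_ ht.2 fun z hz => ?_⟩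
      · exact (le_max_right _ _).trans hy.1.le
      · exact hx z ⟨hy.1.trans hz.1, hz.2⟩

section Volterra
open Filter Topology
open scoped BoundedContinuousFunction

variable {A : Type*} [NormedRing A] [NormedAlgebra ℝ A] [CompleteSpace A]

theorem integrable_bcf_mul (Y : ℝ →ᵇ A) {B : ℝ → A} (hB : Integrable B) :
    Integrable (fun s => Y s * B s) :=
  hB.bdd_mul Y.continuous.aestronglyMeasurable (Eventually.of_forall fun s => Y.norm_coe_le_norm s)

theorem volterra_bound (a : ℝ) (Y : ℝ →ᵇ A) {B : ℝ → A} (hB : Integrable B) (t : ℝ) :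
    ‖∫ s in a..t, Y s * B s‖ ≤ (∫ s, ‖B s‖) * ‖Y‖ := by
  calc ‖∫ s in a..t, Y s * B s‖ ≤ ∫ s in Set.uIoc a t, ‖Y s * B s‖ :=
        intervalIntegral.norm_integral_le_integral_norm_uIoc
    _ ≤ ∫ s, ‖Y s * B s‖ :=
        setIntegral_le_integral (integrable_bcf_mul Y hB).norm
          (Eventually.of_forall fun s => norm_nonneg _)
    _ ≤ ∫ s, ‖B s‖ * ‖Y‖ := by
        apply integral_mono (integrable_bcf_mul Y hB).norm (hB.norm.mul_const _)
        intro s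
        calc ‖Y s * B s‖ ≤ ‖Y s‖ * ‖B s‖ := norm_mul_le _ _
          _ ≤ ‖Y‖ * ‖B s‖ := by gcongr; exact Y.norm_coe_le_norm s
          _ = _ := mul_comm _ _
    _ = _ := integral_mul_const _ _

/-- The Volterra operator `Y ↦ ∫_a^t Y B`. -/
noncomputable def volterra (a : ℝ) (B : ℝ → A) (hB : Integrable B) : (ℝ →ᵇ A) →L[ℝ] (ℝ →ᵇ A) :=
  LinearMap.mkContinuous
    { toFun := fun Y => BoundedContinuousFunction.ofNormedAddCommGroup
        (fun t => ∫ s in a..t, Y s * B s)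
        (intervalIntegral.continuous_primitive
          (fun _ _ => (integrable_bcf_mul Y hB).intervalIntegrable) a)
        ((∫ s, ‖B s‖) * ‖Y‖) (volterra_bound a Y hB)
      map_add' := by
        intro Y Z
        ext t
        have h1 : IntervalIntegrable (fun s => Y s * B s) volume a t :=
          (integrable_bcf_mul Y hB).intervalIntegrable
        have h2 : IntervalIntegrable (fun s => Z s * B s) volume a t :=
          (integrable_bcf_mul Z hB).intervalIntegrable
        simp only [BoundedContinuousFunction.coe_ofNormedAddCommGroup,
          BoundedContinuousFunction.coe_add, Pi.add_apply, add_mul]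
        exact intervalIntegral.integral_add h1 h2
      map_smul' := by
        intro r Y
        ext t
        simp only [BoundedContinuousFunction.coe_ofNormedAddCommGroup,
          BoundedContinuousFunction.coe_smul, smul_mul_assoc, RingHom.id_apply]
        exact intervalIntegral.integral_smul _ _ }
    (∫ s, ‖B s‖) (fun Y => by
      refine (BoundedContinuousFunction.norm_le ?_).2 (volterra_bound a Y hB)
      exact mul_nonneg (integral_nonneg fun _ => norm_nonneg _) (norm_nonneg _))

theorem volterra_apply (a : ℝ) (B : ℝ → A) (hB : Integrable B) (Y : ℝ →ᵇ A) (t : ℝ) :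
    volterra a B hB Y t = ∫ s in a..t, Y s * B s := rfl

theorem neumann_family {E : Type*} [NormedAddCommGroup E] [NormedSpace ℝ E] [CompleteSpace E]
    {P : Type*} [NormedAddCommGroup P] [NormedSpace ℝ P]
    (V : P →L[ℝ] (E →L[ℝ] E)) (e : E) :
    ∃ Y : P → E, HasStrictFDerivAt Y (V.flip e) 0 ∧ Y 0 = e ∧
      ∀ᶠ μ in 𝓝 (0 : P), Y μ = e + V μ (Y μ) := by
  have hd1 : HasStrictFDerivAt (fun μ => 1 - V μ) (-V) 0 :=
    V.hasStrictFDerivAt.const_sub (1 : E →L[ℝ] E)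
  have hd2 : HasStrictFDerivAt (fun μ => Ring.inverse (1 - V μ)) V 0 := by
    have h := hasStrictFDerivAt_ringInverse (𝕜 := ℝ) (1 : (E →L[ℝ] E)ˣ)
    have h' : HasStrictFDerivAt (Ring.inverse : (E →L[ℝ] E) → _)
        (-ContinuousLinearMap.mulLeftRight ℝ (E →L[ℝ] E) 1 1) (1 - V 0) := by
      simpa using h
    have h2 := h'.comp (0 : P) hd1
    convert! h2 using 1
    ext1 μ
    simp
  have hd3 : HasStrictFDerivAt (fun μ => Ring.inverse (1 - V μ) e) (V.flip e) 0 :=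
    (ContinuousLinearMap.apply ℝ E e).hasStrictFDerivAt.comp (0 : P) hd2
  refine ⟨fun μ => Ring.inverse (1 - V μ) e, hd3, by simp, ?_⟩
  have hev : ∀ᶠ μ in 𝓝 (0 : P), IsUnit (1 - V μ) := by
    have hc : ContinuousAt (fun μ => 1 - V μ) 0 := hd1.continuousAt
    have : {x : E →L[ℝ] E | IsUnit x} ∈ 𝓝 (1 - V 0) := Units.isOpen.mem_nhds (by simp)
    exact hc.eventually this
  filter_upwards [hev] with μ hμ
  have h1 : (1 - V μ) (Ring.inverse (1 - V μ) e) = e := by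
    change ((1 - V μ) * Ring.inverse (1 - V μ)) e = e
    rw [Ring.mul_inverse_cancel _ hμ]; rfl
  conv_rhs => lhs; rw [← h1]
  simp

theorem exists_family {n : ℕ} (a b : ℝ) (B : Fin n → ℝ → A) (hB : ∀ j, Integrable (B j)) :
    ∃ Y : (Fin n → ℝ) → ℝ → A,
      (∀ᶠ μ in 𝓝 (0 : Fin n → ℝ), Continuous (Y μ) ∧
        ∀ t, Y μ t = 1 + ∫ s in a..t, Y μ s * (∑ j, μ j • B j s)) ∧
      HasStrictFDerivAt (fun μ => Y μ b)
        (∑ j, (ContinuousLinearMap.proj (R := ℝ) (φ := fun _ : Fin n => ℝ) j).smulRight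
          (∫ s in a..b, B j s)) 0 ∧ Y 0 b = 1 := by
  let V : (Fin n → ℝ) →L[ℝ] ((ℝ →ᵇ A) →L[ℝ] (ℝ →ᵇ A)) :=
    ∑ j, (ContinuousLinearMap.proj (R := ℝ) (φ := fun _ : Fin n => ℝ) j).smulRight
          (volterra a (B j) (hB j))
  have hV : ∀ μ, V μ = ∑ j, μ j • volterra a (B j) (hB j) := by
    intro μ; simp [V]
  have hVa : ∀ μ (Y : ℝ →ᵇ A) t, V μ Y t = ∫ s in a..t, Y s * (∑ j, μ j • B j s) := by
    intro μ Y t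
    rw [hV]
    simp only [_root_.sum_apply, BoundedContinuousFunction.coe_sum, Finset.sum_apply,
      _root_.smul_apply, BoundedContinuousFunction.coe_smul, volterra_apply,
      Finset.mul_sum, mul_smul_comm]
    rw [intervalIntegral.integral_finsetSum]
    · simp only [intervalIntegral.integral_smul]
    · intro j _
      exact ((integrable_bcf_mul Y (hB j)).smul (μ j)).intervalIntegrable
  let one : ℝ →ᵇ A := BoundedContinuousFunction.const ℝ 1
  obtain ⟨Y, hd3, hY0, hev⟩ := neumann_family V one
  refine ⟨fun μ => Y μ, ?_, ?_, ?_⟩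
  · filter_upwards [hev] with μ h2
    refine ⟨(Y μ).continuous, fun t => ?_⟩
    rw [← hVa μ (Y μ) t]
    exact congrArg (fun Z : ℝ →ᵇ A => Z t) h2
  · have h1 := (BoundedContinuousFunction.evalCLM ℝ b : (ℝ →ᵇ A) →L[ℝ] A).hasStrictFDerivAt.comp
      (0 : Fin n → ℝ) hd3
    convert! h1 using 1
    ext1 μ
    simp [hV, volterra_apply, one]
  · change Y 0 b = 1
    rw [hY0]; rfl

end Volterra

section MatFamily
open Filter Topology

theorem matrix_family_aux {A : Type*} [NormedRing A] [NormedAlgebra ℝ A] [FiniteDimensional ℝ A]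
    (e : Matrix (Fin 3) (Fin 3) ℝ ≃ₐ[ℝ] A)
    {n : ℕ} (a b : ℝ) (B : Fin n → ℝ → Matrix (Fin 3) (Fin 3) ℝ)
    (hB : ∀ j p q, Integrable (fun s => B j s p q)) :
    ∃ Y : (Fin n → ℝ) → ℝ → Matrix (Fin 3) (Fin 3) ℝ,
      (∀ᶠ μ in 𝓝 (0 : Fin n → ℝ), (∀ p q, Continuous (fun t => Y μ t p q)) ∧
        ∀ t p q, Y μ t p q = (1 : Matrix (Fin 3) (Fin 3) ℝ) p q
          + ∫ s in a..t, (Y μ s * (∑ j, μ j • B j s)) p q) ∧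
      (∀ p q, HasStrictFDerivAt (fun μ => Y μ b p q)
        (∑ j, (ContinuousLinearMap.proj (R := ℝ) (φ := fun _ : Fin n => ℝ) j).smulRight
          (∫ s in a..b, B j s p q)) 0) ∧ Y 0 b = 1 := by
  have : CompleteSpace A := FiniteDimensional.complete ℝ A
  have hB' : ∀ j, Integrable (fun s => e (B j s)) := by
    intro j
    have : (fun s => e (B j s)) = fun s => ∑ p, ∑ q, B j s p q • e (Matrix.single p q (1 : ℝ)) := by
      funext s
      conv_lhs => rw [Matrix.matrix_eq_sum_single (B j s)]
      simp only [map_sum, ← map_smul, Matrix.smul_single, smul_eq_mul, mul_one]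
    rw [this]
    exact integrable_finsetSum _ fun p _ => integrable_finsetSum _ fun q _ =>
      (hB j p q).smul_const _
  obtain ⟨Y, h1, h2, h3⟩ := exists_family a b (fun j s => e (B j s)) hB'
  let L : Fin 3 → Fin 3 → A →L[ℝ] ℝ := fun p q =>
    LinearMap.toContinuousLinearMap ((Matrix.entryLinearMap ℝ ℝ p q).comp
      e.symm.toLinearMap)
  have hL : ∀ p q M, L p q M = e.symm M p q := fun p q M => rfl
  refine ⟨fun μ t => e.symm (Y μ t), ?_, ?_, by simp [h3]⟩
  · filter_upwards [h1] with μ hμ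
    refine ⟨fun p q => (L p q).continuous.comp hμ.1, fun t p q => ?_⟩
    have hi : Integrable (fun s => ∑ j, μ j • e (B j s)) :=
      integrable_finsetSum _ fun j _ => (hB' j).smul (μ j)
    have hi2 : IntervalIntegrable (fun s => Y μ s * (∑ j, μ j • e (B j s))) volume a t :=
      (hi.intervalIntegrable).continuousOn_mul hμ.1.continuousOn
    have := congrArg (L p q) (hμ.2 t)
    rw [map_add, ← ContinuousLinearMap.intervalIntegral_comp_comm _ hi2] at this
    simpa [hL] using this
  · intro p q
    have := (L p q).hasStrictFDerivAt.comp (0 : Fin n → ℝ) h2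
    convert! this using 1
    ext1 μ
    rw [ContinuousLinearMap.comp_apply]
    simp only [_root_.sum_apply,
      ContinuousLinearMap.smulRight_apply, map_sum, map_smul]
    refine Finset.sum_congr rfl fun j _ => ?_
    rw [← ContinuousLinearMap.intervalIntegral_comp_comm _ (hB' j).intervalIntegrable]
    simp [hL]

theorem matrix_family 
    {n : ℕ} (a b : ℝ) (B : Fin n → ℝ → Matrix (Fin 3) (Fin 3) ℝ)
    (hB : ∀ j p q, Integrable (fun s => B j s p q)) :
    ∃ Y : (Fin n → ℝ) → ℝ → Matrix (Fin 3) (Fin 3) ℝ,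
      (∀ᶠ μ in 𝓝 (0 : Fin n → ℝ), (∀ p q, Continuous (fun t => Y μ t p q)) ∧
        ∀ t p q, Y μ t p q = (1 : Matrix (Fin 3) (Fin 3) ℝ) p q
          + ∫ s in a..t, (Y μ s * (∑ j, μ j • B j s)) p q) ∧
      (∀ p q, HasStrictFDerivAt (fun μ => Y μ b p q)
        (∑ j, (ContinuousLinearMap.proj (R := ℝ) (φ := fun _ : Fin n => ℝ) j).smulRight
          (∫ s in a..b, B j s p q)) 0) ∧ Y 0 b = 1 :=
  matrix_family_aux (Matrix.toEuclideanCLM (n := Fin 3) (𝕜 := ℝ)).toAlgEquiv a b B hB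

end MatFamily

/-- Entrywise absolute continuity with a.e. derivative `x`. -/
def MACD (a b : ℝ) (X x : ℝ → Matrix (Fin 3) (Fin 3) ℝ) : Prop :=
  ∀ i j, ACD a b (fun t => X t i j) (fun t => x t i j)

theorem MACD.mul {a b : ℝ} {X x Z z : ℝ → Matrix (Fin 3) (Fin 3) ℝ} (hX : MACD a b X x)
    (hZ : MACD a b Z z) :
    MACD a b (fun t => X t * Z t) (fun t => x t * Z t + X t * z t) := by
  intro i j
  have h := (((hX i 0).mul (hZ 0 j)).add ((hX i 1).mul (hZ 1 j))).add ((hX i 2).mul (hZ 2 j))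
  convert! h using 1
  · funext t; simp [Matrix.mul_apply, Fin.sum_univ_three]
  · funext t; simp [Matrix.mul_apply, Fin.sum_univ_three]; ring

theorem MACD.transpose {a b : ℝ} {X x : ℝ → Matrix (Fin 3) (Fin 3) ℝ} (hX : MACD a b X x) :
    MACD a b (fun t => (X t)ᵀ) (fun t => (x t)ᵀ) := fun i j => hX j i

theorem MACD.congr_deriv {a b : ℝ} {X x y : ℝ → Matrix (Fin 3) (Fin 3) ℝ} (hX : MACD a b X x)
    (h : ∀ t ∈ Set.Icc a b, x t = y t) : MACD a b X y := fun i j =>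
  (hX i j).congr_deriv fun t ht => by rw [h t ht]

theorem ACD.const_fun {a b : ℝ} (c : ℝ) : ACD a b (fun _ => c) (fun _ => 0) := by
  refine ⟨?_, Filter.Eventually.of_forall fun t _ => hasDerivAt_const _ _⟩
  exact (LipschitzOnWith.absolutelyContinuousOnInterval (K := 0)
    (fun x _ y _ => by simp))

theorem MACD.const_fun {a b : ℝ} (M : Matrix (Fin 3) (Fin 3) ℝ) :
    MACD a b (fun _ => M) (fun _ => 0) := fun i j => ACD.const_fun (M i j)

/-- Conjugation: derivative of `γ M γᵀ` along a flow with generator `N`, where `N` skew. -/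
theorem MACD.conj {a b : ℝ} {X N : ℝ → Matrix (Fin 3) (Fin 3) ℝ}
    (hX : MACD a b X (fun t => X t * N t)) (M : Matrix (Fin 3) (Fin 3) ℝ)
    (hN : ∀ t ∈ Set.Icc a b, (N t)ᵀ = - N t) :
    MACD a b (fun t => X t * M * (X t)ᵀ) (fun t => X t * (N t * M - M * N t) * (X t)ᵀ) := by
  have h := (hX.mul (MACD.const_fun M)).mul hX.transpose
  refine h.congr_deriv fun t ht => ?_
  simp only [Matrix.transpose_mul, hN t ht]
  noncomm_ring

theorem MACD.of_integral {a b : ℝ} (hab : a ≤ b) {X x : ℝ → Matrix (Fin 3) (Fin 3) ℝ}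
    (hx : ∀ i j, IntervalIntegrable (fun s => x s i j) volume a b)
    (h : ∀ t ∈ Set.Icc a b, ∀ i j, X t i j = X a i j + ∫ s in a..t, x s i j) : MACD a b X x :=
  fun i j => ACD.of_integral hab (hx i j) fun t ht => h t ht i j

theorem intervalIntegrable_of_bdd {a b C : ℝ} (hab : a ≤ b) {u : ℝ → ℝ} (hu : Measurable u)
    (hb : ∀ t ∈ Set.Icc a b, |u t| ≤ C) : IntervalIntegrable u volume a b := by
  rw [intervalIntegrable_iff_integrableOn_Icc_of_le hab]
  refine Measure.integrableOn_of_bounded (M := C) (by simp) hu.aestronglyMeasurable ?_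
  exact (ae_restrict_mem measurableSet_Icc).mono fun t ht => hb t ht

theorem fM_skew (α : ℝ) : (fM α)ᵀ = - fM α := by
  ext i j; fin_cases i <;> fin_cases j <;> simp [fM]

theorem gM_skew (α : ℝ) : (gM α)ᵀ = - gM α := by
  ext i j; fin_cases i <;> fin_cases j <;> simp [gM]

theorem entry_continuousOn {S : Set ℝ} {γ : ℝ → Matrix (Fin 3) (Fin 3) ℝ}
    (h : ContinuousOn γ S) (i j : Fin 3) : ContinuousOn (fun t => γ t i j) S :=
  ((continuous_apply_apply i j).continuousOn).comp h (Set.mapsTo_univ _ _)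

theorem AdmissiblePair.macd {α a b : ℝ} {γ : ℝ → Matrix (Fin 3) (Fin 3) ℝ} {u : ℝ → ℝ}
    (h : AdmissiblePair α a b γ u) : MACD a b γ (fun t => γ t * (fM α + u t • gM α)) := by
  refine MACD.of_integral h.hab (fun i j => ?_) h.hode
  have hu := intervalIntegrable_of_bdd h.hab h.humeas h.hubound
  have hc : ∀ (M : Matrix (Fin 3) (Fin 3) ℝ), ContinuousOn (fun s => (γ s * M) i j)
      (Set.uIcc a b) := by
    intro M
    rw [Set.uIcc_of_le h.hab]
    exact entry_continuousOn (h.hcont.mul continuousOn_const) i j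
  have : (fun s => (γ s * (fM α + u s • gM α)) i j) =
      fun s => (γ s * fM α) i j + u s * (γ s * gM α) i j := by
    funext s
    simp [Matrix.mul_add]
  rw [this]
  exact (hc _).intervalIntegrable.add (hu.mul_continuousOn (hc _))

theorem AdmissiblePair.orth {α a b : ℝ} {γ : ℝ → Matrix (Fin 3) (Fin 3) ℝ} {u : ℝ → ℝ}
    (h : AdmissiblePair α a b γ u) : ∀ t ∈ Set.Icc a b, (γ t)ᵀ * γ t = 1 := fun t ht =>
  mul_eq_one_comm.1 (h.hso3 t ht).1

theorem ACD.continuousOn {a b : ℝ} (hab : a ≤ b) {F f : ℝ → ℝ} (h : ACD a b F f) :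
    ContinuousOn F (Set.Icc a b) := by
  rw [← Set.uIcc_of_le hab]; exact h.1.continuousOn

theorem MACD.continuousOn {a b : ℝ} (hab : a ≤ b) {X x : ℝ → Matrix (Fin 3) (Fin 3) ℝ}
    (h : MACD a b X x) : ContinuousOn X (Set.Icc a b) := by
  refine continuousOn_pi.2 fun i => continuousOn_pi.2 fun j => (h i j).continuousOn hab

/-- Flows generated by N with `N` skew and `Y a = 1` stay in `SO(3)`. -/
theorem MACD.so3 {a b : ℝ} (hab : a ≤ b) {Y N : ℝ → Matrix (Fin 3) (Fin 3) ℝ}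
    (hY : MACD a b Y (fun t => Y t * N t)) (hN : ∀ t ∈ Set.Icc a b, (N t)ᵀ = - N t)
    (h1 : Y a = 1) : ∀ t ∈ Set.Icc a b, Y t * (Y t)ᵀ = 1 ∧ (Y t).det = 1 := by
  have ho : ∀ t ∈ Set.Icc a b, Y t * (Y t)ᵀ = 1 := by
    intro t ht
    have h := hY.conj 1 hN
    ext i j
    have := (h i j).const (fun t _ => by simp) t ht
    simpa [h1] using this
  have hd : ∀ t ∈ Set.Icc a b, (Y t).det * (Y t).det = 1 := by
    intro t ht
    have := congrArg Matrix.det (ho t ht)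
    simpa using this
  intro t ht
  refine ⟨ho t ht, ?_⟩
  have hc : ContinuousOn (fun t => (Y t).det) (Set.Icc a t) := by
    have := (hY.continuousOn hab).mono (Set.Icc_subset_Icc_right ht.2)
    exact (Continuous.matrix_det continuous_id).comp_continuousOn this
  by_contra hne
  have h2 : (Y t).det = -1 := by
    rcases mul_self_eq_one_iff.1 (hd t ht) with h | h
    · exact absurd h hne
    · exact h
  have := intermediate_value_Icc' ht.1 hc
  obtain ⟨s, hs, hs2⟩ := this (show (0 : ℝ) ∈ Set.Icc ((Y t).det) ((Y a).det) by
    rw [h2, h1]; simp)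
  have h3 := hd s ⟨hs.1, hs.2.trans ht.2⟩
  simp only at hs2
  rw [hs2] at h3; simp at h3

theorem eq_one_of_lower {Y : Matrix (Fin 3) (Fin 3) ℝ} (h : Y * Yᵀ = 1) (h01 : Y 0 1 = 0)
    (h02 : Y 0 2 = 0) (h12 : Y 1 2 = 0) (hp : ∀ i, 0 < Y i i) : Y = 1 := by
  have e : ∀ i j, Y i 0 * Y j 0 + Y i 1 * Y j 1 + Y i 2 * Y j 2 =
      (1 : Matrix (Fin 3) (Fin 3) ℝ) i j := by
    intro i j
    rw [← h]; simp [Matrix.mul_apply, Fin.sum_univ_three]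
  have key : ∀ x : ℝ, 0 < x → x * x = 1 → x = 1 := by
    intro x hx h; nlinarith
  have e00 := e 0 0
  have e01 := e 0 1
  have e02 := e 0 2
  have e11 := e 1 1
  have e12 := e 1 2
  have e22 := e 2 2
  simp [h01, h02, h12] at e00 e01 e02 e11 e12 e22
  have a0 : Y 0 0 = 1 := key _ (hp 0) e00
  have n0 := (hp 0).ne'
  have n1 := (hp 1).ne'
  have b1 : Y 1 0 = 0 := by tauto
  have b2 : Y 2 0 = 0 := by tauto
  simp [b1, b2] at e11 e12 e22
  have a1 : Y 1 1 = 1 := key _ (hp 1) e11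
  have c2 : Y 2 1 = 0 := by tauto
  simp [c2] at e22
  have a2 : Y 2 2 = 1 := key _ (hp 2) e22
  ext i j
  fin_cases i <;> fin_cases j <;> simp [*]

theorem not_optimal_of_faster {α a b θ : ℝ} {γ X : ℝ → Matrix (Fin 3) (Fin 3) ℝ} {u w : ℝ → ℝ}
    (hab : a < b) (hopt : TimeOptimal α a b γ u) (hθ0 : 0 < θ) (hθ1 : θ < 1) (hw : Measurable w)
    (hwb : ∀ t ∈ Set.Icc a b, |w t| ≤ θ)
    (hX : MACD a b X (fun t => X t * (θ • fM α + w t • gM α)))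
    (hso : ∀ t ∈ Set.Icc a b, X t * (X t)ᵀ = 1 ∧ (X t).det = 1)
    (ha : X a = γ a) (hb : X b = γ b) : False := by
  let φ : ℝ → ℝ := fun σ => θ⁻¹ * σ + (a - θ⁻¹ * a)
  have hφa : φ a = a := by simp [φ]
  have hφb : φ (a + θ * (b - a)) = b := by simp only [φ]; field_simp; ring
  have hφ : ∀ t ∈ Set.Icc a (a + θ * (b - a)), φ t ∈ Set.Icc a b := by
    intro t ht
    have hi : 0 < θ⁻¹ := by positivity
    constructor
    · rw [← hφa]; simp only [φ]; have := mul_le_mul_of_nonneg_left ht.1 hi.le; linarith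
    · rw [← hφb]; simp only [φ]; have := mul_le_mul_of_nonneg_left ht.2 hi.le; linarith
  have hφc : Continuous φ := by fun_prop
  have hpos : 0 < θ * (b - a) := mul_pos hθ0 (sub_pos.2 hab)
  have hadm : AdmissiblePair α a (a + θ * (b - a)) (fun t => X (φ t)) (fun t => θ⁻¹ * w (φ t)) := by
    refine ⟨by linarith, ?_, ?_, fun t ht => hso _ (hφ t ht), ?_, ?_⟩
    · exact (hw.comp hφc.measurable).const_mul _
    · intro t ht
      rw [abs_mul, abs_of_pos (inv_pos.2 hθ0)]
      have := mul_le_mul_of_nonneg_left (hwb _ (hφ t ht)) (inv_pos.2 hθ0).le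
      rwa [inv_mul_cancel₀ hθ0.ne'] at this
    · exact (hX.continuousOn hab.le).comp hφc.continuousOn hφ
    · intro t ht i j
      have h1 := (hX i j).integral (φ t) (hφ t ht)
      simp only [hφa]
      rw [h1]
      congr 1
      have h2 := intervalIntegral.integral_comp_mul_add (a := a) (b := t)
        (fun s => (X s * (θ • fM α + w s • gM α)) i j) (inv_pos.2 hθ0).ne' (a - θ⁻¹ * a)
      rw [show θ⁻¹ * a + (a - θ⁻¹ * a) = a by ring] at h2
      have h3 : ∀ s, (X (φ s) * (fM α + (θ⁻¹ * w (φ s)) • gM α)) i j =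
          θ⁻¹ * (X (φ s) * (θ • fM α + w (φ s) • gM α)) i j := by
        intro s
        have : fM α + (θ⁻¹ * w (φ s)) • gM α = θ⁻¹ • (θ • fM α + w (φ s) • gM α) := by
          rw [smul_add, smul_smul, smul_smul, inv_mul_cancel₀ hθ0.ne', one_smul]
        rw [this, Matrix.mul_smul, Matrix.smul_apply, smul_eq_mul]
      simp only [h3]
      rw [intervalIntegral.integral_const_mul]
      simp only [φ]
      rw [h2, inv_inv, smul_eq_mul, ← mul_assoc, inv_mul_cancel₀ hθ0.ne', one_mul]
  have := hopt.2 _ _ _ _ hadm (by simp only [hφa]; exact ha) (by simp only [hφb]; exact hb)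
  nlinarith


/-- Upper triangular coordinates of a matrix. -/
def vec3 (S : Matrix (Fin 3) (Fin 3) ℝ) : Fin 3 → ℝ := ![S 0 1, S 0 2, S 1 2]

section Variation
open Filter Topology

theorem variation {α a b : ℝ} {γ : ℝ → Matrix (Fin 3) (Fin 3) ℝ} {u : ℝ → ℝ}
    (h : AdmissiblePair α a b γ u) {n : ℕ} (C : Fin n → ℝ → Matrix (Fin 3) (Fin 3) ℝ)
    (hskew : ∀ j s, (C j s)ᵀ = - C j s)
    (hinterv : ∀ j p q, IntervalIntegrable (fun s => (γ s * C j s * (γ s)ᵀ) p q) volume a b)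
    (I : Fin n → Fin 3 → ℝ)
    (hI : ∀ j i, I j i = ∫ s in a..b, vec3 (γ s * C j s * (γ s)ᵀ) i)
    (hspan : ∀ y : Fin 3 → ℝ, ∃ μ : Fin n → ℝ, ∑ j, μ j • I j = y)
    (k : Fin n → ℝ) (hk : ∑ j, k j • I j = 0) (hkpos : ∀ j, 0 < k j)
    (U : Set (Fin n → ℝ)) (hU : U ∈ 𝓝 0) :
    ∃ μ ∈ U, (∀ j, 0 < μ j) ∧ ∃ X : ℝ → Matrix (Fin 3) (Fin 3) ℝ, X a = γ a ∧ X b = γ b ∧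
      (∀ t ∈ Set.Icc a b, X t * (X t)ᵀ = 1 ∧ (X t).det = 1) ∧
      MACD a b X (fun t => X t * (fM α + u t • gM α + ∑ j, μ j • C j t)) := by
  classical
  have hab := h.hab
  let B : Fin n → ℝ → Matrix (Fin 3) (Fin 3) ℝ := fun j s =>
    if s ∈ Set.Icc a b then γ s * C j s * (γ s)ᵀ else 0
  have hBI : ∀ j s, s ∈ Set.Icc a b → B j s = γ s * C j s * (γ s)ᵀ := by
    intro j s hs; simp only [B]; rw [if_pos hs]
  have hB : ∀ j p q, Integrable (fun s => B j s p q) := by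
    intro j p q
    have h1 := (intervalIntegrable_iff_integrableOn_Icc_of_le hab).1 (hinterv j p q)
    have h2 := h1.integrable_indicator measurableSet_Icc
    convert! h2 using 1
    funext s
    simp only [B, Set.indicator]
    split_ifs <;> rfl
  obtain ⟨Y, hY1, hY2, hY3⟩ := matrix_family a b B hB
  have hBint : ∀ j p q, ∫ s in a..b, B j s p q = ∫ s in a..b, (γ s * C j s * (γ s)ᵀ) p q := by
    intro j p q
    apply intervalIntegral.integral_congr
    intro s hs
    rw [Set.uIcc_of_le hab] at hs
    simp only [hBI j s hs]
  let D : (Fin n → ℝ) →L[ℝ] (Fin 3 → ℝ) :=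
    ∑ j, (ContinuousLinearMap.proj (R := ℝ) (φ := fun _ : Fin n => ℝ) j).smulRight (I j)
  have hDa : ∀ μ, D μ = ∑ j, μ j • I j := by
    intro μ; simp [D, _root_.sum_apply]
  have hF : HasStrictFDerivAt (fun μ => vec3 (Y μ b)) D 0 := by
    rw [hasStrictFDerivAt_pi']
    have aux : ∀ i p q, (∀ S : Matrix (Fin 3) (Fin 3) ℝ, vec3 S i = S p q) →
        HasStrictFDerivAt (fun μ => vec3 (Y μ b) i) ((ContinuousLinearMap.proj i).comp D) 0 := by
      intro i p q hi
      have h1 := hY2 p q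
      simp only [hi]
      convert! h1 using 1
      ext1 μ
      rw [ContinuousLinearMap.comp_apply, hDa]
      simp [_root_.sum_apply, hI, hi, hBint]
    intro i
    fin_cases i
    · exact aux 0 0 1 fun S => rfl
    · exact aux 1 0 2 fun S => rfl
    · exact aux 2 1 2 fun S => rfl
  have hdiag : ∀ᶠ μ in 𝓝 (0 : Fin n → ℝ), ∀ i, 0 < Y μ b i i := by
    rw [eventually_all]
    intro i
    have h1 := (hY2 i i).continuousAt
    refine h1.eventually (lt_mem_nhds ?_)
    change 0 < Y 0 b i i
    rw [hY3]; simp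
  have hDr : D.range = ⊤ := by
    rw [LinearMap.range_eq_top]
    intro y
    obtain ⟨μ, hμ⟩ := hspan y
    exact ⟨μ, by rw [← hμ]; exact hDa μ⟩
  obtain ⟨μ, ⟨⟨hμU, hμd⟩, hμc, hμY⟩, hμ2, hμ3⟩ := curve_lemma _ D hF hDr k (by rw [hDa, hk]) hkpos
    _ (inter_mem (inter_mem hU hdiag) hY1)
  refine ⟨μ, hμU, hμ3, ?_⟩
  let N : ℝ → Matrix (Fin 3) (Fin 3) ℝ := fun t => ∑ j, μ j • B j t
  have hNint : ∀ p q, Integrable (fun s => N s p q) := by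
    intro p q
    have : (fun s => N s p q) = fun s => ∑ j, μ j * B j s p q := by
      funext s; simp [N, Matrix.sum_apply]
    rw [this]
    exact integrable_finsetSum _ fun j _ => (hB j p q).const_mul _
  have hYa : Y μ a = 1 := by
    ext p q; rw [hμY a p q]; simp
  have hYm : MACD a b (Y μ) (fun t => Y μ t * N t) := by
    refine MACD.of_integral hab (fun i j => ?_) (fun t _ i j => ?_)
    · have : (fun s => (Y μ s * N s) i j) = fun s =>
          Y μ s i 0 * N s 0 j + Y μ s i 1 * N s 1 j + Y μ s i 2 * N s 2 j := by
        funext s; rw [Matrix.mul_apply, Fin.sum_univ_three]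
      rw [this]
      have hk : ∀ k, IntervalIntegrable (fun s => Y μ s i k * N s k j) volume a b := fun k =>
        (hNint k j).intervalIntegrable.continuousOn_mul (hμc i k).continuousOn
      exact ((hk 0).add (hk 1)).add (hk 2)
    · rw [hYa]; exact hμY t i j
  have hNs : ∀ t ∈ Set.Icc a b, (N t)ᵀ = - N t := by
    intro t ht
    simp only [N, Matrix.transpose_sum, Matrix.transpose_smul, ← Finset.sum_neg_distrib,
      ← smul_neg]
    refine Finset.sum_congr rfl fun j _ => ?_
    rw [hBI j t ht, Matrix.transpose_mul, Matrix.transpose_mul, hskew]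
    simp [Matrix.mul_assoc]
  have hso := hYm.so3 hab hNs hYa
  have hYb : Y μ b = 1 := by
    have h0 : vec3 (Y μ b) = 0 := by
      rw [hμ2]; simp [hY3, vec3]
    refine eq_one_of_lower (hso b ⟨hab, le_rfl⟩).1 ?_ ?_ ?_ hμd
    · exact congrFun h0 0
    · exact congrFun h0 1
    · exact congrFun h0 2
  refine ⟨fun t => Y μ t * γ t, by simp [hYa], by simp [hYb], ?_, ?_⟩
  · intro t ht
    have h1 := hso t ht
    have h2 := h.hso3 t ht
    constructor
    · rw [Matrix.transpose_mul]
      calc Y μ t * γ t * ((γ t)ᵀ * (Y μ t)ᵀ) = Y μ t * (γ t * (γ t)ᵀ) * (Y μ t)ᵀ := by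
            noncomm_ring
        _ = 1 := by rw [h2.1, Matrix.mul_one, h1.1]
    · rw [Matrix.det_mul, h1.2, h2.2, one_mul]
  · refine (hYm.mul h.macd).congr_deriv fun t ht => ?_
    have h3 : N t * γ t = γ t * ∑ j, μ j • C j t := by
      simp only [N, Finset.sum_mul, Finset.mul_sum]
      refine Finset.sum_congr rfl fun j _ => ?_
      rw [hBI j t ht, Matrix.smul_mul, Matrix.mul_smul, Matrix.mul_assoc _ _ (γ t), h.orth t ht,
        Matrix.mul_one]
    rw [Matrix.mul_assoc (Y μ t) (N t), h3]
    noncomm_ring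

end Variation


section Controllable
open Filter Topology

/-- Conjugated entries times a bounded measurable function are integrable. -/
theorem AdmissiblePair.conj_integrable {α a b : ℝ} {γ : ℝ → Matrix (Fin 3) (Fin 3) ℝ} {u : ℝ → ℝ}
    (h : AdmissiblePair α a b γ u) {v : ℝ → ℝ} {C : ℝ} (hv : Measurable v)
    (hvb : ∀ t ∈ Set.Icc a b, |v t| ≤ C) (M : Matrix (Fin 3) (Fin 3) ℝ) (p q : Fin 3) :
    IntervalIntegrable (fun s => v s * (γ s * M * (γ s)ᵀ) p q) volume a b := by
  refine (intervalIntegrable_of_bdd h.hab hv hvb).mul_continuousOn ?_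
  rw [Set.uIcc_of_le h.hab]
  refine entry_continuousOn ((h.hcont.mul continuousOn_const).mul ?_) p q
  exact (Continuous.matrix_transpose continuous_id).comp_continuousOn h.hcont

/-- First order effect of the control `v` compared with `u`. -/
noncomputable def effect (α a b : ℝ) (γ : ℝ → Matrix (Fin 3) (Fin 3) ℝ) (u v : ℝ → ℝ) :
    Fin 3 → ℝ := fun i => ∫ s in a..b, (v s - u s) * vec3 (γ s * gM α * (γ s)ᵀ) i

/-- The set of first order effects. -/
def effects (α a b : ℝ) (γ : ℝ → Matrix (Fin 3) (Fin 3) ℝ) (u : ℝ → ℝ) : Set (Fin 3 → ℝ) :=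
  {y | ∃ v : ℝ → ℝ, Measurable v ∧ (∀ t ∈ Set.Icc a b, |v t| ≤ 1) ∧ effect α a b γ u v = y}

theorem vec3_entry (i : Fin 3) : ∃ p q, ∀ S : Matrix (Fin 3) (Fin 3) ℝ, vec3 S i = S p q := by
  fin_cases i
  · exact ⟨0, 1, fun S => rfl⟩
  · exact ⟨0, 2, fun S => rfl⟩
  · exact ⟨1, 2, fun S => rfl⟩

theorem effects_convex {α a b : ℝ} {γ : ℝ → Matrix (Fin 3) (Fin 3) ℝ} {u : ℝ → ℝ}
    (h : AdmissiblePair α a b γ u) : Convex ℝ (effects α a b γ u) := by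
  rintro _ ⟨v, hv, hvb, rfl⟩ _ ⟨w, hw, hwb, rfl⟩ x y hx hy hxy
  refine ⟨fun t => x * v t + y * w t, (hv.const_mul x).add (hw.const_mul y), ?_, ?_⟩
  · intro t ht
    have h1 := abs_le.1 (hvb t ht)
    have h2 := abs_le.1 (hwb t ht)
    rw [abs_le]
    constructor <;> nlinarith
  · funext i
    obtain ⟨p, q, hpq⟩ := vec3_entry i
    have hb : ∀ v : ℝ → ℝ, Measurable v → (∀ t ∈ Set.Icc a b, |v t| ≤ 1) →
        IntervalIntegrable (fun s => (v s - u s) * (γ s * gM α * (γ s)ᵀ) p q) volume a b := by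
      intro v hv hvb
      refine h.conj_integrable (C := 2) (hv.sub h.humeas) ?_ _ _ _
      intro t ht
      have h1 := abs_le.1 (hvb t ht)
      have h2 := abs_le.1 (h.hubound t ht)
      rw [abs_le, Pi.sub_apply]
      constructor <;> linarith
    simp only [effect, Pi.add_apply, Pi.smul_apply, smul_eq_mul, hpq]
    rw [← intervalIntegral.integral_const_mul, ← intervalIntegral.integral_const_mul,
      ← intervalIntegral.integral_add ((hb v hv hvb).const_mul x) ((hb w hw hwb).const_mul y)]
    congr 1
    funext s
    have : y = 1 - x := by linarith
    rw [this]; ring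

theorem effects_zero {α a b : ℝ} {γ : ℝ → Matrix (Fin 3) (Fin 3) ℝ} {u : ℝ → ℝ}
    (h : AdmissiblePair α a b γ u) : 0 ∈ effects α a b γ u :=
  ⟨u, h.humeas, h.hubound, by funext i; simp [effect]⟩

theorem not_interior {α a b : ℝ} {γ : ℝ → Matrix (Fin 3) (Fin 3) ℝ} {u : ℝ → ℝ}
    (hab : a < b) (hopt : TimeOptimal α a b γ u) : 0 ∉ interior (effects α a b γ u) := by
  intro hinterv
  have h := hopt.1
  have hK : effects α a b γ u ∈ 𝓝 (0 : Fin 3 → ℝ) := mem_interior_iff_mem_nhds.1 hinterv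
  let T : Fin 3 → ℝ := fun i => ∫ s in a..b, vec3 (γ s * (fM α + u s • gM α) * (γ s)ᵀ) i
  let z : Fin 4 → Fin 3 → ℝ := ![![1,0,0], ![0,1,0], ![0,0,1], T - fun _ => 1]
  obtain ⟨η, hη, hz⟩ : ∃ η : ℝ, 0 < η ∧ ∀ i, η • z i ∈ effects α a b γ u := by
    have h1 : ∀ᶠ η : ℝ in 𝓝 0, ∀ i, η • z i ∈ effects α a b γ u := by
      rw [eventually_all]
      intro i
      have hc : ContinuousAt (fun η : ℝ => η • z i) 0 := by fun_prop
      exact hc.eventually (by simpa using hK)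
    have h2 : ∀ᶠ η : ℝ in 𝓝[>] 0, ∀ i, η • z i ∈ effects α a b γ u :=
      h1.filter_mono nhdsWithin_le_nhds
    obtain ⟨η, h3, h4⟩ := (h2.and self_mem_nhdsWithin).exists
    exact ⟨η, h4, h3⟩
  choose v hv hvb hve using hz
  let V : Fin 5 → ℝ → ℝ := ![v 0, v 1, v 2, v 3, u]
  have hVm : ∀ j, Measurable (V j) := by
    intro j
    fin_cases j
    exacts [hv 0, hv 1, hv 2, hv 3, h.humeas]
  have hVb : ∀ j, ∀ t ∈ Set.Icc a b, |V j t| ≤ 1 := by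
    intro j
    fin_cases j
    exacts [hvb 0, hvb 1, hvb 2, hvb 3, h.hubound]
  let κ : Fin 5 → ℝ := ![0,0,0,0,1]
  let C : Fin 5 → ℝ → Matrix (Fin 3) (Fin 3) ℝ := fun j s =>
    (V j s - u s) • gM α - κ j • (fM α + u s • gM α)
  have hCs : ∀ j s, (C j s)ᵀ = - C j s := by
    intro j s
    simp only [C, Matrix.transpose_sub, Matrix.transpose_smul, Matrix.transpose_add, fM_skew,
      gM_skew]
    module
  have hi1 : ∀ j p q, IntervalIntegrable (fun s => (V j s - u s) * (γ s * gM α * (γ s)ᵀ) p q)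
      volume a b := by
    intro j p q
    refine h.conj_integrable (C := 2) ((hVm j).sub h.humeas) ?_ _ _ _
    intro t ht
    have h1 := abs_le.1 (hVb j t ht)
    have h2 := abs_le.1 (h.hubound t ht)
    rw [abs_le, Pi.sub_apply]
    constructor <;> linarith
  have hi2 : ∀ p q, IntervalIntegrable (fun s => (γ s * (fM α + u s • gM α) * (γ s)ᵀ) p q)
      volume a b := by
    intro p q
    have h1 := h.conj_integrable (v := fun _ => 1) (C := 1) measurable_const (by simp) (fM α) p q
    have h2 := h.conj_integrable h.humeas h.hubound (gM α) p q
    convert! h1.add h2 using 1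
    funext s
    simp [Matrix.mul_add, Matrix.add_mul]
  have hCe : ∀ j s p q, (γ s * C j s * (γ s)ᵀ) p q = (V j s - u s) * (γ s * gM α * (γ s)ᵀ) p q
      - κ j * (γ s * (fM α + u s • gM α) * (γ s)ᵀ) p q := by
    intro j s p q
    simp only [C]
    rw [Matrix.mul_sub, Matrix.sub_mul, Matrix.mul_smul, Matrix.mul_smul, Matrix.smul_mul,
      Matrix.smul_mul]
    rfl
  have hCi : ∀ j p q, IntervalIntegrable (fun s => (γ s * C j s * (γ s)ᵀ) p q) volume a b := by
    intro j p q
    simp only [hCe]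
    exact (hi1 j p q).sub ((hi2 p q).const_mul _)
  let I : Fin 5 → Fin 3 → ℝ := fun j => effect α a b γ u (V j) - κ j • T
  have hI : ∀ j i, I j i = ∫ s in a..b, vec3 (γ s * C j s * (γ s)ᵀ) i := by
    intro j i
    obtain ⟨p, q, hpq⟩ := vec3_entry i
    simp only [I, Pi.sub_apply, Pi.smul_apply, smul_eq_mul, effect, T, hpq, hCe]
    rw [intervalIntegral.integral_sub (hi1 j p q) ((hi2 p q).const_mul _),
      intervalIntegral.integral_const_mul]
  have hI0 : I 0 = η • ![1,0,0] := by simpa [I, κ, V, z] using hve 0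
  have hI1 : I 1 = η • ![0,1,0] := by simpa [I, κ, V, z] using hve 1
  have hI2 : I 2 = η • ![0,0,1] := by simpa [I, κ, V, z] using hve 2
  have hI3 : I 3 = η • (T - fun _ => 1) := by simpa [I, κ, V, z] using hve 3
  have hI4 : I 4 = - T := by
    have : effect α a b γ u u = 0 := by funext i; simp [effect]
    simp [I, κ, V, this]
  have hspan : ∀ y : Fin 3 → ℝ, ∃ μ : Fin 5 → ℝ, ∑ j, μ j • I j = y := by
    intro y
    refine ⟨![y 0 / η, y 1 / η, y 2 / η, 0, 0], ?_⟩
    rw [Fin.sum_univ_five, hI0, hI1, hI2]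
    funext i
    fin_cases i <;> simp <;> field_simp
  have hk : ∑ j, (![1,1,1,1,η] : Fin 5 → ℝ) j • I j = 0 := by
    rw [Fin.sum_univ_five, hI0, hI1, hI2, hI3, hI4]
    funext i
    fin_cases i <;> simp [Matrix.vecHead, Matrix.vecTail] <;> ring
  have hkpos : ∀ j, 0 < (![1,1,1,1,η] : Fin 5 → ℝ) j := by
    intro j; fin_cases j <;> simp [hη]
  have hU : {μ : Fin 5 → ℝ | ∑ j, μ j < 1} ∈ 𝓝 (0 : Fin 5 → ℝ) := by
    have hc : Continuous (fun μ : Fin 5 → ℝ => ∑ j, μ j) := by fun_prop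
    exact hc.continuousAt.eventually (gt_mem_nhds (by simp))
  obtain ⟨μ, hμU, hμp, X, hXa, hXb, hXs, hXm⟩ := variation h C hCs hCi I hI hspan _ hk hkpos _ hU
  have hsum : μ 0 + μ 1 + μ 2 + μ 3 + μ 4 < 1 := by
    have : ∑ j, μ j < 1 := hμU
    rwa [Fin.sum_univ_five] at this
  have p0 := hμp 0
  have p1 := hμp 1
  have p2 := hμp 2
  have p3 := hμp 3
  have p4 := hμp 4
  refine not_optimal_of_faster (θ := 1 - μ 4)
    (w := fun t => (1 - μ 4 - μ 0 - μ 1 - μ 2 - μ 3) * u t + μ 0 * v 0 t + μ 1 * v 1 t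
      + μ 2 * v 2 t + μ 3 * v 3 t) hab hopt (by linarith) (by linarith) ?_ ?_ ?_ hXs hXa hXb
  · have := h.humeas
    have := hv 0
    have := hv 1
    have := hv 2
    have := hv 3
    fun_prop
  · intro t ht
    have key : ∀ c x : ℝ, 0 < c → |x| ≤ 1 → -c ≤ c * x ∧ c * x ≤ c := by
      intro c x hc hx
      have := abs_le.1 hx
      constructor <;> nlinarith
    have k0 := key _ _ p0 (hvb 0 t ht)
    have k1 := key _ _ p1 (hvb 1 t ht)
    have k2 := key _ _ p2 (hvb 2 t ht)
    have k3 := key _ _ p3 (hvb 3 t ht)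
    have k4 := key (1 - μ 4 - μ 0 - μ 1 - μ 2 - μ 3) _ (by linarith) (h.hubound t ht)
    rw [abs_le]
    constructor <;> linarith
  · refine hXm.congr_deriv fun t ht => ?_
    congr 1
    rw [Fin.sum_univ_five]
    simp only [C, V, κ]
    simp
    module

end Controllable


/-- Basis of skew matrices. -/
def skE1 : Matrix (Fin 3) (Fin 3) ℝ := !![0,1,0; -1,0,0; 0,0,0]
/-- Basis of skew matrices. -/
def skE2 : Matrix (Fin 3) (Fin 3) ℝ := !![0,0,0; 0,0,1; 0,-1,0]
/-- Basis of skew matrices. -/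
def skE3 : Matrix (Fin 3) (Fin 3) ℝ := !![0,0,1; 0,0,0; -1,0,0]

theorem vec3_smul (r : ℝ) (S : Matrix (Fin 3) (Fin 3) ℝ) : vec3 (r • S) = r • vec3 S := by
  funext i; fin_cases i <;> simp [vec3]

theorem vec3_add (S T : Matrix (Fin 3) (Fin 3) ℝ) : vec3 (S + T) = vec3 S + vec3 T := by
  funext i; fin_cases i <;> simp [vec3]

theorem skew_decomp {S : Matrix (Fin 3) (Fin 3) ℝ} (h : Sᵀ = -S) :
    S = S 0 1 • skE1 + S 0 2 • skE3 + S 1 2 • skE2 := by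
  have e : ∀ i j, S j i = - S i j := fun i j => congrFun (congrFun h i) j
  have d : ∀ i, S i i = 0 := fun i => by have := e i i; linarith
  ext i j
  fin_cases i <;> fin_cases j <;> simp [skE1, skE2, skE3, d]
  · exact e 0 1
  · exact e 0 2
  · exact e 1 2

theorem brk1 (c s : ℝ) : (c • skE1 + s • skE2) * skE1 - skE1 * (c • skE1 + s • skE2)
    = (-s) • skE3 := by
  ext i j
  fin_cases i <;> fin_cases j <;> simp [skE1, skE2, skE3]

theorem brk2 (c s : ℝ) : (c • skE1 + s • skE2) * skE2 - skE2 * (c • skE1 + s • skE2)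
    = c • skE3 := by
  ext i j
  fin_cases i <;> fin_cases j <;> simp [skE1, skE2, skE3]

theorem brk3 (c s : ℝ) : (c • skE1 + s • skE2) * skE3 - skE3 * (c • skE1 + s • skE2)
    = s • skE1 + (-c) • skE2 := by
  ext i j
  fin_cases i <;> fin_cases j <;> simp [skE1, skE2, skE3]

theorem MACD.lin {a b : ℝ} {X x : ℝ → Matrix (Fin 3) (Fin 3) ℝ} (h : MACD a b X x)
    (f : (Fin 3 → ℝ) →ₗ[ℝ] ℝ) : ACD a b (fun t => f (vec3 (X t))) (fun t => f (vec3 (x t))) := by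
  have hf : ∀ S, f (vec3 S) = f (Pi.single 0 1) * S 0 1 + f (Pi.single 1 1) * S 0 2
      + f (Pi.single 2 1) * S 1 2 := by
    intro S
    have : vec3 S = S 0 1 • Pi.single 0 1 + S 0 2 • Pi.single 1 1 + S 1 2 • Pi.single 2 1 := by
      funext i; fin_cases i <;> simp [vec3]
    rw [this, map_add, map_add, map_smul, map_smul, map_smul]
    simp only [smul_eq_mul]; ring
  simp only [hf]
  exact (((h 0 1).const_mul _).add ((h 0 2).const_mul _)).add ((h 1 2).const_mul _)

theorem pmp {α a b : ℝ} {γ : ℝ → Matrix (Fin 3) (Fin 3) ℝ} {u : ℝ → ℝ}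
    (hα : α ∈ Set.Ioo 0 (π / 2)) (hab : a < b) (hopt : TimeOptimal α a b γ u) :
    ∃ (n : ℕ) (τ : ℕ → ℝ), τ 0 = a ∧ τ n = b ∧ (∀ i < n, τ i < τ (i + 1)) ∧
      ∀ i < n, ArcOn u (τ i) (τ (i + 1)) := by
  have h := hopt.1
  have hc : 0 < Real.cos α := Real.cos_pos_of_mem_Ioo ⟨by linarith [hα.1, Real.pi_pos], hα.2⟩
  have hs : 0 < Real.sin α := Real.sin_pos_of_pos_of_lt_pi hα.1 (by linarith [hα.2, Real.pi_pos])
  obtain ⟨f, hf0, hfK⟩ := separation _ (effects_convex h) (effects_zero h) (not_interior hab hopt)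
  have hN : ∀ t, fM α + u t • gM α = Real.cos α • skE1 + (u t * Real.sin α) • skE2 := by
    intro t; simp only [fM, gM, skE1, skE2, smul_smul]
  have hmac := h.macd
  simp only [hN] at hmac
  have hsk : ∀ t ∈ Set.Icc a b, (Real.cos α • skE1 + (u t * Real.sin α) • skE2)ᵀ
      = - (Real.cos α • skE1 + (u t * Real.sin α) • skE2) := by
    intro t _
    rw [← hN, Matrix.transpose_add, Matrix.transpose_smul, fM_skew, gM_skew]; module
  have hM : ∀ E, ACD a b (fun t => f (vec3 (γ t * E * (γ t)ᵀ))) _ := fun E =>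
    (hmac.conj E hsk).lin f
  have hphi : ∀ t (r : ℝ) E, f (vec3 (γ t * (r • E) * (γ t)ᵀ)) = r * f (vec3 (γ t * E * (γ t)ᵀ)) := by
    intro t r E
    rw [Matrix.mul_smul, Matrix.smul_mul, vec3_smul, map_smul, smul_eq_mul]
  have hpha : ∀ t E E', f (vec3 (γ t * (E + E') * (γ t)ᵀ)) =
      f (vec3 (γ t * E * (γ t)ᵀ)) + f (vec3 (γ t * E' * (γ t)ᵀ)) := by
    intro t E E'
    rw [Matrix.mul_add, Matrix.add_mul, vec3_add, map_add]
  have h1 := hM skE1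
  have h2 := hM skE2
  have h3 := hM skE3
  simp only [brk1, brk2, brk3, hphi, hpha] at h1 h2 h3
  set m1 : ℝ → ℝ := fun t => f (vec3 (γ t * skE1 * (γ t)ᵀ)) with hm1
  set m2 : ℝ → ℝ := fun t => f (vec3 (γ t * skE2 * (γ t)ᵀ)) with hm2
  set m3 : ℝ → ℝ := fun t => f (vec3 (γ t * skE3 * (γ t)ᵀ)) with hm3
  have h1' : ACD a b m1 (fun t => -(u t * Real.sin α * m3 t)) :=
    h1.congr_deriv fun t _ => by simp only [hm3]; ring
  have h2' : ACD a b m2 (fun t => Real.cos α * m3 t) := h2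
  have h3' : ACD a b m3 (fun t => u t * Real.sin α * m1 t - Real.cos α * m2 t) :=
    h3.congr_deriv fun t _ => by simp only [hm1, hm2]; ring
  have hm2c : ContinuousOn m2 (Set.Icc a b) := h2'.continuousOn hab.le
  refine extremal_structure hab.le hc hs h.hubound h1' h2' h3' ?_ ?_
  · classical
    let Z : Set ℝ := Set.Icc a b ∩ m2 ⁻¹' Set.Ici 0
    have hZ : MeasurableSet Z :=
      (hm2c.preimage_isClosed_of_isClosed isClosed_Icc isClosed_Ici).measurableSet
    let v : ℝ → ℝ := fun t => if t ∈ Z then 1 else -1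
    have hv : Measurable v := Measurable.ite hZ measurable_const measurable_const
    have hvb : ∀ t, |v t| ≤ 1 := by
      intro t; simp only [v]; split_ifs <;> simp
    have hvm : ∀ t ∈ Set.Icc a b, v t * m2 t = |m2 t| := by
      intro t ht
      simp only [v]
      split_ifs with hz
      · rw [abs_of_nonneg hz.2, one_mul]
      · have : m2 t < 0 := by
          by_contra hh
          exact hz ⟨ht, not_lt.1 hh⟩
        rw [abs_of_neg this]; ring
    have hK := hfK _ ⟨v, hv, fun t _ => hvb t, rfl⟩
    have hii : ∀ i, IntervalIntegrable (fun s => (v s - u s) * vec3 (γ s * gM α * (γ s)ᵀ) i)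
        volume a b := by
      intro i
      obtain ⟨p, q, hpq⟩ := vec3_entry i
      simp only [hpq]
      refine h.conj_integrable (C := 2) (hv.sub h.humeas) ?_ _ _ _
      intro t ht
      have h1 := abs_le.1 (hvb t)
      have h2 := abs_le.1 (h.hubound t ht)
      rw [abs_le, Pi.sub_apply]
      constructor <;> linarith
    have hg : gM α = Real.sin α • skE2 := rfl
    have heff : f (effect α a b γ u v) = Real.sin α * ∫ s in a..b, (v s - u s) * m2 s := by
      have hfs : ∀ y, f y = ∑ i, f (Pi.single i 1) * y i := by
        intro y
        rw [LinearMap.pi_apply_eq_sum_univ f y]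
        refine Finset.sum_congr rfl fun i _ => ?_
        rw [smul_eq_mul, mul_comm]
        congr 2
        funext j
        simp [Pi.single_apply, eq_comm]
      rw [hfs]
      simp only [effect]
      simp only [← intervalIntegral.integral_const_mul]
      rw [← intervalIntegral.integral_finsetSum fun i _ => (hii i).const_mul _]
      congr 1
      funext s
      have : Real.sin α * m2 s = f (vec3 (γ s * gM α * (γ s)ᵀ)) := by
        rw [hg, hphi]
      rw [show Real.sin α * ((v s - u s) * m2 s) = (v s - u s) * (Real.sin α * m2 s) by ring,
        this, hfs, Finset.mul_sum]
      refine Finset.sum_congr rfl fun i _ => by ring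
    rw [heff] at hK
    have hle : ∫ s in a..b, (v s - u s) * m2 s ≤ 0 := by
      by_contra hh
      exact absurd hK (not_le.2 (mul_pos hs (not_le.1 hh)))
    have hnn : ∀ t ∈ Set.Icc a b, 0 ≤ (v t - u t) * m2 t := by
      intro t ht
      rw [sub_mul, hvm t ht]
      have : u t * m2 t ≤ |m2 t| := by
        calc u t * m2 t ≤ |u t * m2 t| := le_abs_self _
          _ = |u t| * |m2 t| := abs_mul _ _
          _ ≤ 1 * |m2 t| := by gcongr; exact h.hubound t ht
          _ = _ := one_mul _
      linarith
    have hinterv : IntervalIntegrable (fun s => (v s - u s) * m2 s) volume a b := by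
      have h1 : IntervalIntegrable (fun s => v s - u s) volume a b :=
        (intervalIntegrable_of_bdd hab.le hv fun t _ => hvb t).sub
          (intervalIntegrable_of_bdd hab.le h.humeas h.hubound)
      exact h1.mul_continuousOn (by rwa [Set.uIcc_of_le hab.le])
    have hge := intervalIntegral.integral_nonneg (μ := volume) hab.le hnn
    have h0 := le_antisymm hle hge
    rw [intervalIntegral.integral_eq_zero_iff_of_le_of_nonneg_ae hab.le
      ((ae_restrict_mem measurableSet_Ioc).mono fun t ht => hnn t ⟨ht.1.le, ht.2⟩) hinterv,
      Filter.EventuallyEq, ae_restrict_iff' measurableSet_Ioc] at h0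
    apply ae_Ioo_of_mem_Icc
    filter_upwards [h0] with t ht ht2
    have h4 := ht ⟨ht2.1, ht2.2.le⟩
    rw [sub_mul, hvm t ⟨ht2.1.le, ht2.2.le⟩] at h4
    simp only [Pi.zero_apply] at h4
    linarith
  · rintro ⟨z1, z2, z3⟩
    apply hf0
    have haI : a ∈ Set.Icc a b := ⟨le_rfl, hab.le⟩
    have key : ∀ y, f y = 0 := by
      intro y
      let S : Matrix (Fin 3) (Fin 3) ℝ := y 0 • skE1 + y 1 • skE3 + y 2 • skE2
      have hS : Sᵀ = -S := by
        ext i j; fin_cases i <;> fin_cases j <;> simp [S, skE1, skE2, skE3]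
      have hy : vec3 S = y := by
        funext i; fin_cases i <;> simp [S, skE1, skE2, skE3, vec3]
      have hR : ((γ a)ᵀ * S * γ a)ᵀ = - ((γ a)ᵀ * S * γ a) := by
        simp [Matrix.transpose_mul, hS, Matrix.mul_assoc]
      have hSR : S = γ a * ((γ a)ᵀ * S * γ a) * (γ a)ᵀ := by
        have := (h.hso3 a haI).1
        calc S = (γ a * (γ a)ᵀ) * S * (γ a * (γ a)ᵀ) := by rw [this]; simp
          _ = _ := by noncomm_ring
      rw [← hy, hSR, skew_decomp hR]
      simp only [hphi, hpha]
      simp only [hm1, hm2, hm3] at z1 z2 z3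
      rw [z1, z2, z3]; simp
    exact LinearMap.ext key

/-- Every time optimal trajectory of `(Σ)` is a finite concatenation of bang and
singular arcs. -/
theorem finite_concatenation (α a b : ℝ) (γ : ℝ → Matrix (Fin 3) (Fin 3) ℝ) (u : ℝ → ℝ)
    (hα : α ∈ Set.Ioo 0 (π / 2)) (hopt : TimeOptimal α a b γ u) :
    ∃ (n : ℕ) (τ : ℕ → ℝ), τ 0 = a ∧ τ n = b ∧ (∀ i < n, τ i < τ (i + 1)) ∧
      ∀ i < n, ∃ c : ℝ, (c = 1 ∨ c = -1 ∨ c = 0) ∧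
        ∀ᵐ t ∂(volume.restrict (Set.Icc (τ i) (τ (i + 1)))), u t = c := by
  rcases eq_or_lt_of_le hopt.1.hab with h | h
  · subst h
    exact ⟨0, fun _ => a, rfl, rfl, by simp, by simp⟩
  · exact pmp hα h hopt
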